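/- Let Ω ⊂ ℝ² be open and convex. Let v₁, v₂ ∈ ℝ² be unit vectors and let a₁, a₂ ∈ (0,1] be such that the cones C₁ := C(v₁,a₁) and C₂ := C(v₂,a₂) satisfy C₁ ∩ C₂ = {0} and (−C₁) ∩ C₂ = {0}. Suppose f′₁, f′₂ ∈ BV(Ω) satisfy dDf′₁/d|Df′₁|(x) ∈ C₁ for |Df′₁|-a.e. x ∈ Ω and dDf′₂/d|Df′₂|(x) ∈ C₂ for |Df′₂|-a.e. x ∈ Ω. Define f₁(y) := f′₁(y) + v₁·y, f₂(y) := f′₂(y) + v₂·y, and f := (f₁,f₂). Then the precise representative f* : Ω → ℝ² is injective. -/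

import Mathlib

/-!
The dual cone of `Cᵢ` consists of the vectors with nonnegative inner product with all of `Cᵢ`.
Mollifying `f′ᵢ` and integrating by parts, every mollification is nondecreasing along the dual
cone of `Cᵢ`; since mollifications converge almost everywhere, `f′ᵢ` itself is nondecreasing along
the dual cone off one null set (`IsBVScalarOn.exists_null_monotone`).

Let `x ≠ y` in `Ω` and `w = y - x`. The line orthogonal to `w` cannot meet both `C₁` and `C₂`
outside the origin (`orthogonal_line_misses_cone`), so for some `i`, by convexity of `Cᵢ`, one
of `w`, `-w` is strictly positive on `Cᵢ \ {0}` (`cone_sign`), say `w`. By compactness `w` is then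
interior to the dual cone, which makes `f′ᵢ` essentially bounded near `x` and `y`, so that the
infima defining the precise representatives are genuine. Translating superlevel sets by `w` gives
`fᵢ*(x) + vᵢ·w ≤ fᵢ*(y)` (`preciseRep_lt`), and `vᵢ·w > 0` because `vᵢ ∈ Cᵢ`.
-/

open MeasureTheory Filter
open scoped ENNReal RealInnerProductSpace

noncomputable section

/-- The closed cone `C(v,a) = {x ∈ ℝ² : x·v ≥ a|x|}`. -/
def cone (v : EuclideanSpace ℝ (Fin 2)) (a : ℝ) : Set (EuclideanSpace ℝ (Fin 2)) :=
  {x | a * ‖x‖ ≤ ⟪x, v⟫}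

/-- `u ∈ BV(Ω)` for an open set `Ω ⊂ ℝ²`, presented through the polar decomposition
`Du = σ |Du|`: `ν` plays the role of the total variation measure `|Du|` (a finite positive
measure concentrated on `Ω`) and `σ = dDu/d|Du|` is the vector-valued Radon–Nikodym density
of unit length `ν`-a.e.; the defining requirement is the integration-by-parts formula
`∫_Ω u ∂φ/∂y_l dL² = −∫_Ω φ σ_l dν` for all `φ ∈ C_c¹(Ω)`. -/
structure IsBVScalarOn (Ω : Set (EuclideanSpace ℝ (Fin 2)))
    (u : EuclideanSpace ℝ (Fin 2) → ℝ)
    (ν : Measure (EuclideanSpace ℝ (Fin 2)))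
    (σ : EuclideanSpace ℝ (Fin 2) → EuclideanSpace ℝ (Fin 2)) : Prop where
  integrable : IntegrableOn u Ω volume
  finite : ν Set.univ < ⊤
  concentrated : ν Ωᶜ = 0
  meas : Measurable σ
  unit : ∀ᵐ x ∂ν, ‖σ x‖ = 1
  parts : ∀ φ : EuclideanSpace ℝ (Fin 2) → ℝ, ContDiff ℝ 1 φ → HasCompactSupport φ →
    tsupport φ ⊆ Ω → ∀ l : Fin 2,
      ∫ x in Ω, u x * fderiv ℝ φ x (EuclideanSpace.single l (1:ℝ)) ∂volume
        = - ∫ x, φ x * σ x l ∂ν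

/-- The precise representative `u*`. -/
def preciseRep (u : EuclideanSpace ℝ (Fin 2) → ℝ) (x : EuclideanSpace ℝ (Fin 2)) : ℝ :=
  sInf {t : ℝ | Tendsto (fun r : ℝ =>
      volume (Metric.ball x r ∩ {y | t < u y}) / volume (Metric.ball x r))
    (nhdsWithin 0 (Set.Ioi 0)) (nhds 0)}

/-- The componentwise precise representative `f* = (f₁*, f₂*)` of `f = (f₁, f₂)`. -/
def preciseRepVec (f₁ f₂ : EuclideanSpace ℝ (Fin 2) → ℝ) (x : EuclideanSpace ℝ (Fin 2)) :
    EuclideanSpace ℝ (Fin 2) :=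
  (WithLp.equiv 2 (Fin 2 → ℝ)).symm ![preciseRep f₁ x, preciseRep f₂ x]

/-! ### Monotonicity of `u` off a null set -/

/-- The integration-by-parts formula of `IsBVScalarOn` in an arbitrary direction `e`. -/
lemma IsBVScalarOn.parts_dir {Ω : Set (EuclideanSpace ℝ (Fin 2))}
    {u : EuclideanSpace ℝ (Fin 2) → ℝ} {ν : Measure (EuclideanSpace ℝ (Fin 2))}
    {σ : EuclideanSpace ℝ (Fin 2) → EuclideanSpace ℝ (Fin 2)} (h : IsBVScalarOn Ω u ν σ)
    {φ : EuclideanSpace ℝ (Fin 2) → ℝ} (hφ : ContDiff ℝ 1 φ) (hc : HasCompactSupport φ)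
    (hs : tsupport φ ⊆ Ω) (e : EuclideanSpace ℝ (Fin 2)) :
    ∫ x in Ω, u x * fderiv ℝ φ x e ∂volume = - ∫ x, φ x * ⟪σ x, e⟫ ∂ν := by
  have : IsFiniteMeasure ν := ⟨h.finite⟩
  have he : e = ∑ l : Fin 2, e l • EuclideanSpace.single l (1 : ℝ) := by
    ext i
    fin_cases i <;> simp
  have hcont : ∀ l : Fin 2,
      Continuous fun x => fderiv ℝ φ x (EuclideanSpace.single l (1 : ℝ)) := fun l =>
    (hφ.continuous_fderiv one_ne_zero).clm_apply continuous_const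
  have hint1 : ∀ l : Fin 2, Integrable
      (fun x => u x * fderiv ℝ φ x (EuclideanSpace.single l (1 : ℝ))) (volume.restrict Ω) := by
    intro l
    have hcs : HasCompactSupport fun x => fderiv ℝ φ x (EuclideanSpace.single l (1 : ℝ)) :=
      hc.fderiv_apply ℝ _
    obtain ⟨C, hC⟩ := hcs.exists_bound_of_continuous (hcont l)
    exact h.integrable.mul_bdd (hcont l).aestronglyMeasurable (Eventually.of_forall hC)
  have hint2 : ∀ l : Fin 2, Integrable (fun x => φ x * σ x l) ν := by
    intro l
    obtain ⟨C, hC⟩ := hc.exists_bound_of_continuous hφ.continuous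
    refine Integrable.of_bound (C := C * 1) ?_ ?_
    · refine (hφ.continuous.measurable.mul ?_).aestronglyMeasurable
      exact (EuclideanSpace.proj (𝕜 := ℝ) l).continuous.measurable.comp h.meas
    · filter_upwards [h.unit] with x hx
      rw [norm_mul]
      refine mul_le_mul (hC x) ?_ (norm_nonneg _) ((norm_nonneg _).trans (hC x))
      exact (PiLp.norm_apply_le (σ x) l).trans hx.le
  have e1 : ∀ x, u x * fderiv ℝ φ x e
      = ∑ l : Fin 2, e l * (u x * fderiv ℝ φ x (EuclideanSpace.single l (1 : ℝ))) := by
    intro x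
    conv_lhs => rw [he]
    rw [map_sum, Finset.mul_sum]
    refine Finset.sum_congr rfl fun l _ => ?_
    rw [map_smul, smul_eq_mul]
    ring
  have e2 : ∀ x, φ x * ⟪σ x, e⟫ = ∑ l : Fin 2, e l * (φ x * σ x l) := by
    intro x
    rw [PiLp.inner_apply, Finset.mul_sum]
    refine Finset.sum_congr rfl fun l _ => ?_
    simp only [RCLike.inner_apply, conj_trivial]
    ring
  simp_rw [e1, e2]
  rw [integral_finsetSum _ fun l _ => (hint1 l).const_mul _,
    integral_finsetSum _ fun l _ => (hint2 l).const_mul _, ← Finset.sum_neg_distrib]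
  refine Finset.sum_congr rfl fun l _ => ?_
  rw [integral_const_mul, integral_const_mul, h.parts φ hφ hc hs l, mul_neg]

open ContinuousLinearMap in
/-- At a point `p` whose closed `rOut`-ball lies in `Ω`, the mollification of `u` has
nonnegative derivative in every direction `e` with `⟪σ, e⟫ ≥ 0` `ν`-a.e.: the derivative equals
`∫ φ(p - y) ⟪σ y, e⟫ dν(y)`. -/
lemma IsBVScalarOn.mollified_deriv {Ω : Set (EuclideanSpace ℝ (Fin 2))} (hΩ : IsOpen Ω)
    {u : EuclideanSpace ℝ (Fin 2) → ℝ} {ν : Measure (EuclideanSpace ℝ (Fin 2))}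
    {σ : EuclideanSpace ℝ (Fin 2) → EuclideanSpace ℝ (Fin 2)} (h : IsBVScalarOn Ω u ν σ)
    (φ : ContDiffBump (0 : EuclideanSpace ℝ (Fin 2))) {p e : EuclideanSpace ℝ (Fin 2)}
    (hp : Metric.closedBall p φ.rOut ⊆ Ω) (he : ∀ᵐ x ∂ν, 0 ≤ ⟪σ x, e⟫) :
    ∃ L : EuclideanSpace ℝ (Fin 2) →L[ℝ] ℝ,
      HasFDerivAt (convolution (φ.normed volume) (Ω.indicator u) (lsmul ℝ ℝ) volume) L p
        ∧ 0 ≤ L e := by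
  have hg : LocallyIntegrable (Ω.indicator u) volume :=
    ((integrable_indicator_iff hΩ.measurableSet).2 h.integrable).locallyIntegrable
  have hcd : ContDiff ℝ 1 (φ.normed volume) := φ.contDiff_normed (n := 1)
  have hcs : HasCompactSupport (φ.normed volume) := φ.hasCompactSupport_normed
  refine ⟨_, hcs.hasFDerivAt_convolution_left (lsmul ℝ ℝ) hcd hg p, ?_⟩
  have hex := (hcs.fderiv ℝ).convolutionExists_left
    ((lsmul ℝ ℝ).precompL (EuclideanSpace ℝ (Fin 2)) : _ →L[ℝ] ℝ →L[ℝ] _)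
    (hcd.continuous_fderiv one_ne_zero) hg p
  rw [convolution_eq_swap, ContinuousLinearMap.integral_apply hex.integrable_swap]
  set ψ : EuclideanSpace ℝ (Fin 2) → ℝ := fun y => φ.normed volume (p - y) with hψ
  have hψcd : ContDiff ℝ 1 ψ := hcd.comp (contDiff_const.sub contDiff_id)
  have hsub : tsupport ψ ⊆ Metric.closedBall p φ.rOut := by
    refine closure_minimal ?_ Metric.isClosed_closedBall
    intro y hy
    have : p - y ∈ Function.support (φ.normed volume) := hy
    rw [φ.support_normed_eq] at this
    rw [Metric.mem_closedBall, dist_comm, dist_eq_norm]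
    simpa using (mem_ball_zero_iff.1 this).le
  have hψcs : HasCompactSupport ψ :=
    (isCompact_closedBall p φ.rOut).of_isClosed_subset (isClosed_tsupport _) hsub
  have hder : ∀ y, fderiv ℝ ψ y e = - fderiv ℝ (φ.normed volume) (p - y) e := by
    intro y
    have h1 : HasFDerivAt (fun y => p - y)
        (-(ContinuousLinearMap.id ℝ (EuclideanSpace ℝ (Fin 2)))) y :=
      (hasFDerivAt_id y).const_sub p
    have h2 := ((hcd.differentiable one_ne_zero) (p - y)).hasFDerivAt.comp y h1
    have h3 : fderiv ℝ ψ y = _ := h2.fderiv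
    rw [h3]
    simp
  have hparts := h.parts_dir hψcd hψcs (hsub.trans hp) e
  have hnonneg : 0 ≤ ∫ x, ψ x * ⟪σ x, e⟫ ∂ν := by
    refine integral_nonneg_of_ae ?_
    filter_upwards [he] with x hx
    exact mul_nonneg (φ.nonneg_normed _) hx
  have heq : ∀ t, ((lsmul ℝ ℝ).precompL (EuclideanSpace ℝ (Fin 2))
      (fderiv ℝ (φ.normed volume) (p - t)) (Ω.indicator u t)) e
      = Ω.indicator (fun y => - (u y * fderiv ℝ ψ y e)) t := by
    intro t
    by_cases ht : t ∈ Ω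
    · simp [ht, hder, precompL_apply, mul_comm]
    · simp [ht]
  simp_rw [heq]
  rw [integral_indicator hΩ.measurableSet, integral_neg, hparts, neg_neg]
  exact hnonneg

open ContinuousLinearMap in
/-- Off a null set, `u` is monotone in every direction of the dual cone of `cone v a`. The null
set does not depend on the direction: it consists of the points where the mollifications of `u`
fail to converge to `u`. -/
lemma IsBVScalarOn.exists_null_monotone {Ω : Set (EuclideanSpace ℝ (Fin 2))} (hΩ : IsOpen Ω)
    (hconv : Convex ℝ Ω)
    {u : EuclideanSpace ℝ (Fin 2) → ℝ} {ν : Measure (EuclideanSpace ℝ (Fin 2))}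
    {σ : EuclideanSpace ℝ (Fin 2) → EuclideanSpace ℝ (Fin 2)} (h : IsBVScalarOn Ω u ν σ)
    {v : EuclideanSpace ℝ (Fin 2)} {a : ℝ} (hcone : ∀ᵐ x ∂ν, σ x ∈ cone v a) :
    ∃ N : Set (EuclideanSpace ℝ (Fin 2)), volume N = 0 ∧
      ∀ q ∈ Ω \ N, ∀ z ∈ Ω \ N, (∀ s ∈ cone v a, 0 ≤ ⟪s, z - q⟫) → u q ≤ u z := by
  have hg : LocallyIntegrable (Ω.indicator u) volume :=
    ((integrable_indicator_iff hΩ.measurableSet).2 h.integrable).locallyIntegrable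
  let φ : ℕ → ContDiffBump (0 : EuclideanSpace ℝ (Fin 2)) := fun n =>
    { rIn := 1 / ((n : ℝ) + 1)
      rOut := 2 * (1 / ((n : ℝ) + 1))
      rIn_pos := by positivity
      rIn_lt_rOut := by
        have : (0 : ℝ) < 1 / ((n : ℝ) + 1) := by positivity
        linarith }
  have hφ : Tendsto (fun n => (φ n).rOut) atTop (nhds 0) := by
    simpa [φ] using (tendsto_one_div_add_atTop_nhds_zero_nat (𝕜 := ℝ)).const_mul 2
  have hae := ContDiffBump.ae_convolution_tendsto_right_of_locallyIntegrable (μ := volume)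
    (K := 2) hφ (Eventually.of_forall fun n => le_rfl) hg
  refine ⟨_, ae_iff.1 hae, ?_⟩
  rintro q ⟨hq, hqN⟩ z ⟨hz, hzN⟩ hdual
  simp only [Set.mem_ofPred_eq, not_not] at hqN hzN
  rw [Set.indicator_of_mem hq] at hqN
  rw [Set.indicator_of_mem hz] at hzN
  have hseg : segment ℝ q z ⊆ Ω := hconv.segment_subset hq hz
  have hcomp : IsCompact (segment ℝ q z) := by
    rw [segment_eq_image_lineMap]
    exact isCompact_Icc.image AffineMap.lineMap_continuous
  obtain ⟨δ, hδ, hδΩ⟩ := hcomp.exists_cthickening_subset_open hΩ hseg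
  refine le_of_tendsto_of_tendsto hqN hzN ?_
  filter_upwards [hφ.eventually (gt_mem_nhds hδ)] with n hn
  set U := convolution ((φ n).normed volume) (Ω.indicator u) (lsmul ℝ ℝ) volume with hU
  have hderiv : ∀ t ∈ Set.Icc (0 : ℝ) 1,
      ∃ d : ℝ, HasDerivAt (fun t : ℝ => U (q + t • (z - q))) d t ∧ 0 ≤ d := by
    intro t ht
    have hmem : q + t • (z - q) ∈ segment ℝ q z := by
      rw [segment_eq_image']
      exact ⟨t, ht, rfl⟩
    obtain ⟨L, hL, hLe⟩ := h.mollified_deriv hΩ (φ n) (p := q + t • (z - q)) (e := z - q)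
      (((Metric.closedBall_subset_closedBall hn.le).trans
        (Metric.closedBall_subset_cthickening hmem δ)).trans hδΩ)
      (hcone.mono fun x hx => hdual _ hx)
    refine ⟨L (z - q), ?_, hLe⟩
    have h1 : HasDerivAt (fun t : ℝ => q + t • (z - q)) (z - q) t := by
      simpa using ((hasDerivAt_id t).smul_const (z - q)).const_add q
    exact hL.comp_hasDerivAt t h1
  have hmono : MonotoneOn (fun t : ℝ => U (q + t • (z - q))) (Set.Icc 0 1) := by
    refine monotoneOn_of_deriv_nonneg (convex_Icc 0 1) ?_ ?_ ?_
    · intro t ht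
      obtain ⟨d, hd, -⟩ := hderiv t ht
      exact hd.continuousAt.continuousWithinAt
    · intro t ht
      obtain ⟨d, hd, -⟩ := hderiv t (interior_subset ht)
      exact hd.differentiableAt.differentiableWithinAt
    · intro t ht
      obtain ⟨d, hd, hd0⟩ := hderiv t (interior_subset ht)
      rwa [hd.deriv]
  simpa using hmono (Set.left_mem_Icc.2 zero_le_one) (Set.right_mem_Icc.2 zero_le_one) zero_le_one

/-! ### The precise representative -/

/-- The set whose infimum is the precise representative at `x`. -/
def densitySet (f : EuclideanSpace ℝ (Fin 2) → ℝ) (x : EuclideanSpace ℝ (Fin 2)) : Set ℝ :=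
  {t : ℝ | Tendsto (fun r : ℝ =>
      volume (Metric.ball x r ∩ {y | t < f y}) / volume (Metric.ball x r))
    (nhdsWithin 0 (Set.Ioi 0)) (nhds 0)}

lemma mem_densitySet_of_le {f : EuclideanSpace ℝ (Fin 2) → ℝ} {x : EuclideanSpace ℝ (Fin 2)}
    {N : Set (EuclideanSpace ℝ (Fin 2))} (hN : volume N = 0) {r₀ t : ℝ} (hr₀ : 0 < r₀)
    (h : ∀ z ∈ Metric.ball x r₀ \ N, f z ≤ t) : t ∈ densitySet f x := by
  refine tendsto_const_nhds.congr' ?_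
  filter_upwards [Ioo_mem_nhdsGT hr₀] with r hr
  have : volume (Metric.ball x r ∩ {y | t < f y}) = 0 := by
    refine measure_mono_null ?_ hN
    rintro z ⟨hz, hzt⟩
    by_contra hzN
    exact absurd (h z ⟨Metric.ball_subset_ball hr.2.le hz, hzN⟩) (not_le.2 hzt)
  rw [this, ENNReal.zero_div]

lemma le_of_mem_densitySet {f : EuclideanSpace ℝ (Fin 2) → ℝ} {x : EuclideanSpace ℝ (Fin 2)}
    {N : Set (EuclideanSpace ℝ (Fin 2))} (hN : volume N = 0) {r₀ m t : ℝ} (hr₀ : 0 < r₀)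
    (h : ∀ z ∈ Metric.ball x r₀ \ N, m ≤ f z) (ht : t ∈ densitySet f x) : m ≤ t := by
  by_contra! hlt
  -- Otherwise `{f > t}` has full measure near `x`, hence density one at `x`.
  have h1 : Tendsto (fun r : ℝ =>
      volume (Metric.ball x r ∩ {y | t < f y}) / volume (Metric.ball x r))
      (nhdsWithin 0 (Set.Ioi 0)) (nhds 1) := by
    refine tendsto_const_nhds.congr' ?_
    filter_upwards [Ioo_mem_nhdsGT hr₀] with r hr
    have : volume (Metric.ball x r ∩ {y | t < f y}) = volume (Metric.ball x r) := by
      refine le_antisymm (measure_mono Set.inter_subset_left) ?_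
      rw [← measure_sdiff_null hN]
      refine measure_mono ?_
      rintro z ⟨hz, hzN⟩
      exact ⟨hz, hlt.trans_le (h z ⟨Metric.ball_subset_ball hr.2.le hz, hzN⟩)⟩
    rw [this, ENNReal.div_self (Metric.measure_ball_pos volume x hr.1).ne'
      measure_ball_lt_top.ne]
  exact zero_ne_one (tendsto_nhds_unique ht h1)

/-- Near any `p ∈ Ω` all points `z` are related to one point `q` off the null set `N` by a
displacement `q - z` that is, after scaling, `δ`-close to `w`. -/
lemma exists_comparison_point {Ω : Set (EuclideanSpace ℝ (Fin 2))} (hΩ : IsOpen Ω)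
    {N : Set (EuclideanSpace ℝ (Fin 2))} (hN : volume N = 0) {p : EuclideanSpace ℝ (Fin 2)}
    (hp : p ∈ Ω) (w : EuclideanSpace ℝ (Fin 2)) {δ : ℝ} (hδ : 0 < δ) :
    ∃ r₀ > 0, ∃ ε > 0, ∃ q ∈ Ω \ N, Metric.ball p r₀ ⊆ Ω ∧
      ∀ z ∈ Metric.ball p r₀, ‖(q - z) - ε • w‖ ≤ ε * δ := by
  have hcont : ContinuousAt (fun ε : ℝ => p + ε • w) 0 := by fun_prop
  have hev : ∀ᶠ ε in nhdsWithin (0 : ℝ) (Set.Ioi 0), p + ε • w ∈ Ω := by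
    refine nhdsWithin_le_nhds (hcont.eventually_mem ?_)
    simpa using hΩ.mem_nhds hp
  obtain ⟨ε, hεΩ, hε⟩ := (hev.and self_mem_nhdsWithin).exists
  have hε : 0 < ε := hε
  obtain ⟨r₁, hr₁, hb₁⟩ := Metric.isOpen_iff.1 hΩ _ hεΩ
  obtain ⟨r₂, hr₂, hb₂⟩ := Metric.isOpen_iff.1 hΩ _ hp
  have hεδ : 0 < ε * δ / 2 := by positivity
  set r₃ := min r₁ (ε * δ / 2) with hr₃
  have hr₃pos : 0 < r₃ := lt_min hr₁ hεδ
  have hne : (Metric.ball (p + ε • w) r₃ \ N).Nonempty := by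
    refine nonempty_of_measure_ne_zero (μ := volume) ?_
    rw [measure_sdiff_null hN]
    exact (Metric.measure_ball_pos volume _ hr₃pos).ne'
  obtain ⟨q, hq, hqN⟩ := hne
  refine ⟨min r₂ (ε * δ / 2), lt_min hr₂ hεδ, ε, hε, q,
    ⟨hb₁ (Metric.ball_subset_ball (min_le_left _ _) hq), hqN⟩,
    (Metric.ball_subset_ball (min_le_left _ _)).trans hb₂, ?_⟩
  intro z hz
  have hq' : ‖q - (p + ε • w)‖ < ε * δ / 2 :=
    (mem_ball_iff_norm.1 hq).trans_le (min_le_right _ _)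
  have hz' : ‖z - p‖ < ε * δ / 2 := (mem_ball_iff_norm.1 hz).trans_le (min_le_right _ _)
  have : (q - z) - ε • w = (q - (p + ε • w)) - (z - p) := by abel
  rw [this]
  linarith [norm_sub_le (q - (p + ε • w)) (z - p)]

lemma mem_cone_self {v : EuclideanSpace ℝ (Fin 2)} (hv : ‖v‖ = 1) {a : ℝ} (ha : a ≤ 1) :
    v ∈ cone v a := by
  simp [cone, hv, ha]

/-- A vector positive on `cone v a \ {0}` is interior to the dual cone. -/
lemma exists_dual_radius {v : EuclideanSpace ℝ (Fin 2)} (hv : ‖v‖ = 1) {a : ℝ} (ha : a ≤ 1)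
    {w : EuclideanSpace ℝ (Fin 2)} (hw : ∀ s ∈ cone v a, s ≠ 0 → 0 < ⟪s, w⟫) :
    ∃ δ > 0, ∀ s ∈ cone v a, δ * ‖s‖ ≤ ⟪s, w⟫ := by
  have hclosed : IsClosed (cone v a) :=
    isClosed_le (by fun_prop) (by fun_prop)
  have hK : IsCompact (Metric.sphere (0 : EuclideanSpace ℝ (Fin 2)) 1 ∩ cone v a) :=
    (isCompact_sphere _ _).inter_right hclosed
  obtain ⟨s₀, hs₀, hmin⟩ := hK.exists_isMinOn ⟨v, by simp [hv], mem_cone_self hv ha⟩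
    (f := fun s => ⟪s, w⟫) (by fun_prop)
  have hs₀ne : s₀ ≠ 0 := by
    rintro rfl
    simpa using hs₀.1
  refine ⟨⟪s₀, w⟫, hw s₀ hs₀.2 hs₀ne, fun s hs => ?_⟩
  rcases eq_or_ne s 0 with rfl | hne
  · simp
  have hpos : 0 < ‖s‖ := norm_pos_iff.2 hne
  have hmem : ‖s‖⁻¹ • s ∈ Metric.sphere (0 : EuclideanSpace ℝ (Fin 2)) 1 ∩ cone v a := by
    refine ⟨by simp [norm_smul, hpos.ne'], ?_⟩
    have hs' : a * ‖s‖ ≤ ⟪s, v⟫ := hs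
    change a * ‖‖s‖⁻¹ • s‖ ≤ ⟪‖s‖⁻¹ • s, v⟫
    rw [norm_smul, real_inner_smul_left, norm_inv, norm_norm, mul_left_comm]
    exact mul_le_mul_of_nonneg_left hs' (by positivity)
  have h := isMinOn_iff.1 hmin _ hmem
  rw [real_inner_smul_left, inv_mul_eq_div, le_div_iff₀ hpos] at h
  exact h

lemma inner_nonneg_of_close {v : EuclideanSpace ℝ (Fin 2)} {a : ℝ}
    {w d : EuclideanSpace ℝ (Fin 2)} {δ ε : ℝ} (hε : 0 < ε)
    (hw : ∀ s ∈ cone v a, δ * ‖s‖ ≤ ⟪s, w⟫) (hd : ‖d - ε • w‖ ≤ ε * δ) :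
    ∀ s ∈ cone v a, 0 ≤ ⟪s, d⟫ := by
  intro s hs
  have h1 : ⟪s, d⟫ = ε * ⟪s, w⟫ + ⟪s, d - ε • w⟫ := by
    rw [inner_sub_right, real_inner_smul_right]
    ring
  have h2 := abs_le.1 (abs_real_inner_le_norm s (d - ε • w))
  have h3 : ‖s‖ * ‖d - ε • w‖ ≤ ‖s‖ * (ε * δ) := mul_le_mul_of_nonneg_left hd (norm_nonneg s)
  have h4 := mul_le_mul_of_nonneg_left (hw s hs) hε.le
  nlinarith [h2.1]

/-- If `u` increases off a null set along the dual cone and `y - x` is interior to that dual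
cone, then `u + ⟪v, ·⟫` has a strictly larger precise representative at `y` than at `x`. -/
lemma preciseRep_lt {Ω : Set (EuclideanSpace ℝ (Fin 2))} (hΩ : IsOpen Ω)
    {N : Set (EuclideanSpace ℝ (Fin 2))} (hN : volume N = 0)
    {v : EuclideanSpace ℝ (Fin 2)} (hv : ‖v‖ = 1) {a : ℝ} (ha : a ≤ 1)
    {u f : EuclideanSpace ℝ (Fin 2) → ℝ} (hf : ∀ y, f y = u y + ⟪v, y⟫)
    (hmono : ∀ q ∈ Ω \ N, ∀ z ∈ Ω \ N, (∀ s ∈ cone v a, 0 ≤ ⟪s, z - q⟫) → u q ≤ u z)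
    {x y : EuclideanSpace ℝ (Fin 2)} (hx : x ∈ Ω) (hy : y ∈ Ω)
    (hw : ∀ s ∈ cone v a, s ≠ 0 → 0 < ⟪s, y - x⟫) :
    preciseRep f x < preciseRep f y := by
  obtain ⟨δ, hδ, hδw⟩ := exists_dual_radius hv ha hw
  have hvne : v ≠ 0 := norm_ne_zero_iff.1 (by rw [hv]; exact one_ne_zero)
  have hpos : 0 < ⟪v, y - x⟫ := hw v (mem_cone_self hv ha) hvne
  have hlin : ∀ p z : EuclideanSpace ℝ (Fin 2), ∀ r, z ∈ Metric.ball p r →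
      |⟪v, z⟫| ≤ ‖p‖ + r := by
    intro p z r hz
    have h1 := abs_real_inner_le_norm v z
    rw [hv, one_mul] at h1
    have h2 := norm_add_le p (z - p)
    rw [add_sub_cancel] at h2
    linarith [mem_ball_iff_norm.1 hz]
  have hne : (densitySet f y).Nonempty := by
    obtain ⟨r₀, hr₀, ε, hε, q, hq, hb, hclose⟩ := exists_comparison_point hΩ hN hy (y - x) hδ
    refine ⟨u q + (‖y‖ + r₀), mem_densitySet_of_le hN hr₀ ?_⟩
    rintro z ⟨hz, hzN⟩
    have h1 := hmono z ⟨hb hz, hzN⟩ q hq (inner_nonneg_of_close hε hδw (hclose z hz))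
    rw [hf]
    linarith [(abs_le.1 (hlin y z r₀ hz)).2]
  have hbdd : BddBelow (densitySet f x) := by
    obtain ⟨r₀, hr₀, ε, hε, q, hq, hb, hclose⟩ := exists_comparison_point hΩ hN hx (-(y - x)) hδ
    refine ⟨u q - (‖x‖ + r₀), fun t ht => le_of_mem_densitySet hN hr₀ ?_ ht⟩
    rintro z ⟨hz, hzN⟩
    have hc : ‖(z - q) - ε • (y - x)‖ ≤ ε * δ := by
      have hneg : (z - q) - ε • (y - x) = -((q - z) - ε • (-(y - x))) := by
        rw [smul_neg]
        abel
      rw [hneg, norm_neg]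
      exact hclose z hz
    have h1 := hmono q hq z ⟨hb hz, hzN⟩ (inner_nonneg_of_close hε hδw hc)
    rw [hf]
    linarith [(abs_le.1 (hlin x z r₀ hz)).1]
  have hshift : ∀ t ∈ densitySet f y, t - ⟪v, y - x⟫ ∈ densitySet f x := by
    intro t ht
    obtain ⟨r₁, hr₁, hb₁⟩ := Metric.isOpen_iff.1 hΩ _ hx
    obtain ⟨r₂, hr₂, hb₂⟩ := Metric.isOpen_iff.1 hΩ _ hy
    refine tendsto_of_tendsto_of_tendsto_of_le_of_le' tendsto_const_nhds ht
      (Eventually.of_forall fun _ => zero_le) ?_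
    filter_upwards [Ioo_mem_nhdsGT (lt_min hr₁ hr₂)] with r hr
    rw [Measure.addHaar_ball_center volume x, Measure.addHaar_ball_center volume y]
    refine ENNReal.div_le_div_right ?_ _
    set M : Set (EuclideanSpace ℝ (Fin 2)) := N ∪ ((y - x) + ·) ⁻¹' N with hM
    have hMnull : volume M = 0 := by
      refine measure_union_null hN ?_
      rw [measure_preimage_add, hN]
    rw [← measure_sdiff_null hMnull, ← measure_preimage_add volume (y - x) (_ ∩ _)]
    refine measure_mono ?_
    rintro z ⟨⟨hz, hzt⟩, hzM⟩
    simp only [hM, Set.mem_union, Set.mem_preimage, not_or] at hzM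
    have hball : (y - x) + z ∈ Metric.ball y r := by
      rw [mem_ball_iff_norm] at hz ⊢
      convert hz using 2
      abel
    have h1 := hmono z ⟨hb₁ (Metric.ball_subset_ball (hr.2.le.trans (min_le_left _ _)) hz), hzM.1⟩
      ((y - x) + z) ⟨hb₂ (Metric.ball_subset_ball (hr.2.le.trans (min_le_right _ _)) hball), hzM.2⟩
      (by
        intro s hs
        rw [add_sub_cancel_right]
        exact (by positivity : (0 : ℝ) ≤ δ * ‖s‖).trans (hδw s hs))
    refine ⟨hball, ?_⟩
    simp only [Set.mem_ofPred_eq, hf] at hzt ⊢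
    rw [inner_add_right]
    linarith
  have hle : preciseRep f x + ⟪v, y - x⟫ ≤ preciseRep f y := by
    refine le_csInf hne fun t ht => ?_
    have : preciseRep f x ≤ t - ⟪v, y - x⟫ := csInf_le hbdd (hshift t ht)
    linarith
  linarith

/-! ### Geometry of the cones -/

/-- If the line orthogonal to `w` meets `cone v a` only at the origin, then `w` or `-w` is
positive on the rest of the cone. -/
lemma cone_sign {v : EuclideanSpace ℝ (Fin 2)} {a : ℝ} (ha : 0 < a)
    {w : EuclideanSpace ℝ (Fin 2)} (hw : ∀ s ∈ cone v a, ⟪s, w⟫ = 0 → s = 0) :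
    (∀ s ∈ cone v a, s ≠ 0 → 0 < ⟪s, w⟫) ∨ (∀ s ∈ cone v a, s ≠ 0 → 0 < ⟪s, -w⟫) := by
  by_contra! hcon
  obtain ⟨⟨s, hs, hsne, hsw⟩, ⟨s', hs', hsne', hsw'⟩⟩ := hcon
  rw [inner_neg_right, neg_nonpos] at hsw'
  have hlt : ⟪s, w⟫ < 0 := lt_of_le_of_ne hsw fun h => hsne (hw s hs h)
  have hlt' : 0 < ⟪s', w⟫ := lt_of_le_of_ne hsw' fun h => hsne' (hw s' hs' h.symm)
  have hs2 : a * ‖s‖ ≤ ⟪s, v⟫ := hs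
  have hs2' : a * ‖s'‖ ≤ ⟪s', v⟫ := hs'
  have hn : 0 < ‖s‖ := norm_pos_iff.2 hsne
  have hn' : 0 < ‖s'‖ := norm_pos_iff.2 hsne'
  -- This positive combination lies in the cone and is orthogonal to `w`, but it is nonzero
  -- because both terms have positive inner product with `v`.
  set c := ⟪s', w⟫ • s + (-⟪s, w⟫) • s' with hc
  have hcv : ⟪c, v⟫ = ⟪s', w⟫ * ⟪s, v⟫ + (-⟪s, w⟫) * ⟪s', v⟫ := by
    rw [hc, inner_add_left, real_inner_smul_left, real_inner_smul_left]
  have hcn : ‖c‖ ≤ ⟪s', w⟫ * ‖s‖ + (-⟪s, w⟫) * ‖s'‖ := by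
    refine (norm_add_le _ _).trans_eq ?_
    rw [norm_smul, norm_smul, Real.norm_of_nonneg hlt'.le,
      Real.norm_of_nonneg (neg_nonneg.2 hlt.le)]
  have h1 := mul_le_mul_of_nonneg_left hs2 hlt'.le
  have h2 := mul_le_mul_of_nonneg_left hs2' (neg_nonneg.2 hlt.le)
  have hcmem : c ∈ cone v a := by
    change a * ‖c‖ ≤ ⟪c, v⟫
    have h3 := mul_le_mul_of_nonneg_left hcn ha.le
    rw [hcv]
    linarith
  have hc0 : c = 0 := by
    refine hw c hcmem ?_
    rw [hc, inner_add_left, real_inner_smul_left, real_inner_smul_left]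
    ring
  have hpos : 0 < ⟪c, v⟫ := by
    have h4 : 0 < ⟪s', w⟫ * (a * ‖s‖) := by positivity
    have h5 : 0 < (-⟪s, w⟫) * (a * ‖s'‖) := mul_pos (neg_pos.2 hlt) (by positivity)
    rw [hcv]
    linarith
  rw [hc0, inner_zero_left] at hpos
  exact lt_irrefl _ hpos

lemma smul_mem_cone {v s : EuclideanSpace ℝ (Fin 2)} {a c : ℝ} (hc : 0 ≤ c)
    (hs : s ∈ cone v a) : c • s ∈ cone v a := by
  have hs' : a * ‖s‖ ≤ ⟪s, v⟫ := hs
  change a * ‖c • s‖ ≤ ⟪c • s, v⟫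
  rw [norm_smul, real_inner_smul_left, Real.norm_of_nonneg hc, mul_left_comm]
  exact mul_le_mul_of_nonneg_left hs' hc

/-- In the plane, the line orthogonal to `w ≠ 0` cannot meet both cones outside the origin, as
two nonzero vectors on one line are positive multiples of each other up to sign. -/
lemma orthogonal_line_misses_cone {v₁ v₂ : EuclideanSpace ℝ (Fin 2)} {a₁ a₂ : ℝ}
    (hC : cone v₁ a₁ ∩ cone v₂ a₂ = {0}) (hC' : (Neg.neg '' cone v₁ a₁) ∩ cone v₂ a₂ = {0})
    {w : EuclideanSpace ℝ (Fin 2)} (hw : w ≠ 0) :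
    (∀ s ∈ cone v₁ a₁, ⟪s, w⟫ = 0 → s = 0) ∨ (∀ s ∈ cone v₂ a₂, ⟪s, w⟫ = 0 → s = 0) := by
  by_contra! hcon
  obtain ⟨⟨s, hs, hsw, hsne⟩, ⟨s', hs', hsw', hsne'⟩⟩ := hcon
  obtain ⟨c, hc⟩ : ∃ c : ℝ, s' = c • s := by
    have hsum : ∀ p : EuclideanSpace ℝ (Fin 2), ⟪p, w⟫ = p 0 * w 0 + p 1 * w 1 := by
      intro p
      simp [PiLp.inner_apply, Fin.sum_univ_two, mul_comm]
    rw [hsum] at hsw hsw'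
    have hdet : s 0 * s' 1 - s 1 * s' 0 = 0 := by
      have h0 : w 0 * (s 0 * s' 1 - s 1 * s' 0) = 0 := by
        linear_combination s' 1 * hsw - s 1 * hsw'
      have h1 : w 1 * (s 0 * s' 1 - s 1 * s' 0) = 0 := by
        linear_combination s 0 * hsw' - s' 0 * hsw
      rcases mul_eq_zero.1 h0 with h0 | h0
      · rcases mul_eq_zero.1 h1 with h1 | h1
        · exact absurd (by ext i; fin_cases i <;> simp [h0, h1]) hw
        · exact h1
      · exact h0
    by_cases h0 : s 0 = 0
    · have h1 : s 1 ≠ 0 := fun h1 => hsne (by ext i; fin_cases i <;> simp [h0, h1])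
      refine ⟨s' 1 / s 1, ?_⟩
      ext i
      fin_cases i
      · have : s 1 * s' 0 = 0 := by linear_combination s' 1 * h0 - hdet
        simpa [h0, h1] using this
      · simp [h1]
    · refine ⟨s' 0 / s 0, ?_⟩
      ext i
      fin_cases i
      · simp [h0]
      · simp only [Fin.mk_one, PiLp.smul_apply, smul_eq_mul]
        field_simp
        linear_combination hdet
  rcases le_total 0 c with h0 | h0
  · have : s' ∈ cone v₁ a₁ ∩ cone v₂ a₂ := ⟨hc ▸ smul_mem_cone h0 hs, hs'⟩
    rw [hC] at this
    exact hsne' this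
  · have : s' ∈ (Neg.neg '' cone v₁ a₁) ∩ cone v₂ a₂ :=
      ⟨⟨(-c) • s, smul_mem_cone (neg_nonneg.2 h0) hs, by simp [hc]⟩, hs'⟩
    rw [hC'] at this
    exact hsne' this

/-- A single component already separates two points of `Ω` if the line orthogonal to their
difference meets its cone only at the origin. -/
lemma preciseRep_ne {Ω : Set (EuclideanSpace ℝ (Fin 2))} (hΩ : IsOpen Ω)
    (hconv : Convex ℝ Ω) {v : EuclideanSpace ℝ (Fin 2)} (hv : ‖v‖ = 1) {a : ℝ} (ha : 0 < a)
    (ha' : a ≤ 1) {u f : EuclideanSpace ℝ (Fin 2) → ℝ}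
    {ν : Measure (EuclideanSpace ℝ (Fin 2))}
    {σ : EuclideanSpace ℝ (Fin 2) → EuclideanSpace ℝ (Fin 2)} (h : IsBVScalarOn Ω u ν σ)
    (hcone : ∀ᵐ x ∂ν, σ x ∈ cone v a) (hf : ∀ y, f y = u y + ⟪v, y⟫)
    {x y : EuclideanSpace ℝ (Fin 2)} (hx : x ∈ Ω) (hy : y ∈ Ω)
    (hw : ∀ s ∈ cone v a, ⟪s, y - x⟫ = 0 → s = 0) : preciseRep f x ≠ preciseRep f y := by
  obtain ⟨N, hN, hmono⟩ := h.exists_null_monotone hΩ hconv hcone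
  rcases cone_sign ha hw with hs | hs
  · exact (preciseRep_lt hΩ hN hv ha' hf hmono hx hy hs).ne
  · rw [neg_sub] at hs
    exact (preciseRep_lt hΩ hN hv ha' hf hmono hy hx hs).ne'

/-- The injectivity part of Theorem 3.8: with cones `C₁, C₂` meeting only at the origin
(also after negating `C₁`), components `f′₁, f′₂ ∈ BV(Ω)` whose polar densities lie in the
respective cones a.e., and `fᵢ(y) := f′ᵢ(y) + vᵢ·y`, the precise representative
`f* = (f₁*, f₂*) : Ω → ℝ²` is injective. -/
theorem precise_representative_injective (Ω : Set (EuclideanSpace ℝ (Fin 2)))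
    (hΩopen : IsOpen Ω) (hΩconv : Convex ℝ Ω)
    (v₁ v₂ : EuclideanSpace ℝ (Fin 2)) (hv₁ : ‖v₁‖ = 1) (hv₂ : ‖v₂‖ = 1)
    (a₁ a₂ : ℝ) (ha₁ : 0 < a₁) (ha₁' : a₁ ≤ 1) (ha₂ : 0 < a₂) (ha₂' : a₂ ≤ 1)
    (hC : cone v₁ a₁ ∩ cone v₂ a₂ = {0})
    (hC' : (Neg.neg '' cone v₁ a₁) ∩ cone v₂ a₂ = {0})
    (f₁' f₂' : EuclideanSpace ℝ (Fin 2) → ℝ)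
    (ν₁ ν₂ : Measure (EuclideanSpace ℝ (Fin 2)))
    (σ₁ σ₂ : EuclideanSpace ℝ (Fin 2) → EuclideanSpace ℝ (Fin 2))
    (hBV₁ : IsBVScalarOn Ω f₁' ν₁ σ₁) (hBV₂ : IsBVScalarOn Ω f₂' ν₂ σ₂)
    (hcone₁ : ∀ᵐ x ∂ν₁, σ₁ x ∈ cone v₁ a₁) (hcone₂ : ∀ᵐ x ∂ν₂, σ₂ x ∈ cone v₂ a₂)
    (f₁ f₂ : EuclideanSpace ℝ (Fin 2) → ℝ)
    (hf₁ : ∀ y, f₁ y = f₁' y + ⟪v₁, y⟫) (hf₂ : ∀ y, f₂ y = f₂' y + ⟪v₂, y⟫) :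
    Set.InjOn (preciseRepVec f₁ f₂) Ω := by
  intro x hx y hy hxy
  by_contra hne
  have h1 : preciseRep f₁ x = preciseRep f₁ y := by
    simpa [preciseRepVec] using congrArg (fun p : EuclideanSpace ℝ (Fin 2) => p 0) hxy
  have h2 : preciseRep f₂ x = preciseRep f₂ y := by
    simpa [preciseRepVec] using congrArg (fun p : EuclideanSpace ℝ (Fin 2) => p 1) hxy
  rcases orthogonal_line_misses_cone hC hC' (sub_ne_zero.2 (Ne.symm hne)) with hw | hw
  · exact preciseRep_ne hΩopen hΩconv hv₁ ha₁ ha₁' hBV₁ hcone₁ hf₁ hx hy hw h1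
  · exact preciseRep_ne hΩopen hΩconv hv₂ ha₂ ha₂' hBV₂ hcone₂ hf₂ hx hy hw h2
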